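/- Let Ω ⊆ ℝ² be open, ε > 0, λ > 0, and let Z : Ω → ℝ² be smooth. Suppose v : Ω × ℝ → ℂ and B : Ω × ℝ → ℝ² are smooth and satisfy the accelerated Ginzburg-Landau equations pointwise on Ω × ℝ, with h' := curl B: λ⁻¹ ∂_t v = Δ_B v + (v/ε²)(1−|v|²) + 2i ∇_B v · Z − v|Z|², and λ⁻¹ ∂_t B = ∇^⊥ h' + (iv, ∇_B v) + (|v|²−1) Z. Let T be the stress-energy tensor with components T_{ij} = (∂_i^B v, ∂_j^B v) − δ_{ij}(½|∇_B v|² + (1−|v|²)²/(4ε²) − ½(curl B)²). Then pointwise on Ω × ℝ: div T = λ⁻¹((∂_t v, ∇_B v) − h' (∂_t B)^⊥) + (v, ∇_B v)|Z|² − μ(v,B) Z^⊥, where (div T)_i := ∂₁T_{1i} + ∂₂T_{2i}. -/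

import Mathlib

noncomputable section

open Complex

/-- Real inner product of two complex numbers: `(a,b) = Re a · Re b + Im a · Im b`. -/
def rip (a b : ℂ) : ℝ := a.re * b.re + a.im * b.im

/-- `(a, X)` for `a : ℂ` and `X : ℂ²`: the vector in `ℝ²` with components `(a,X₁)`, `(a,X₂)`. -/
def ripv (a : ℂ) (X : ℂ × ℂ) : ℝ × ℝ := (rip a X.1, rip a X.2)

/-- Dot product of `X : ℂ²` with `Z : ℝ²`: `X·Z = X₁Z₁ + X₂Z₂ ∈ ℂ`. -/
def cdotR (X : ℂ × ℂ) (Z : ℝ × ℝ) : ℂ := X.1 * (Z.1 : ℂ) + X.2 * (Z.2 : ℂ)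

/-- Euclidean dot product on `ℝ²`. -/
def rdot (a b : ℝ × ℝ) : ℝ := a.1 * b.1 + a.2 * b.2

/-- Perpendicular of a vector: `Z^⊥ = (−Z₂, Z₁)`. -/
def perp (a : ℝ × ℝ) : ℝ × ℝ := (-a.2, a.1)

/-! ### Spatial differential operators for functions on `ℝ²` -/

/-- First spatial partial derivative `∂₁`. -/
def pd1 {E : Type*} [NormedAddCommGroup E] [NormedSpace ℝ E]
    (f : ℝ × ℝ → E) (x : ℝ × ℝ) : E := fderiv ℝ f x (1, 0)

/-- Second spatial partial derivative `∂₂`. -/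
def pd2 {E : Type*} [NormedAddCommGroup E] [NormedSpace ℝ E]
    (f : ℝ × ℝ → E) (x : ℝ × ℝ) : E := fderiv ℝ f x (0, 1)

/-- Gradient `∇g = (∂₁g, ∂₂g)`. -/
def sgrad (g : ℝ × ℝ → ℝ) (x : ℝ × ℝ) : ℝ × ℝ := (pd1 g x, pd2 g x)

/-- Perpendicular gradient `∇^⊥ g = (−∂₂g, ∂₁g)`. -/
def sgradPerp (g : ℝ × ℝ → ℝ) (x : ℝ × ℝ) : ℝ × ℝ := (-(pd2 g x), pd1 g x)

/-- Laplacian `Δg = ∂₁∂₁g + ∂₂∂₂g`. -/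
def slap (g : ℝ × ℝ → ℝ) (x : ℝ × ℝ) : ℝ := pd1 (pd1 g) x + pd2 (pd2 g) x

/-- Curl of a vector field: `curl X = ∂₁X₂ − ∂₂X₁`. -/
def scurl (X : ℝ × ℝ → ℝ × ℝ) (x : ℝ × ℝ) : ℝ := (pd1 X x).2 - (pd2 X x).1

/-- Divergence of a vector field: `div X = ∂₁X₁ + ∂₂X₂`. -/
def sdiv (X : ℝ × ℝ → ℝ × ℝ) (x : ℝ × ℝ) : ℝ := (pd1 X x).1 + (pd2 X x).2

/-- Covariant partial derivative `∂₁^A u = ∂₁u − iA₁u`. -/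
def cpd1 (A : ℝ × ℝ → ℝ × ℝ) (u : ℝ × ℝ → ℂ) (x : ℝ × ℝ) : ℂ :=
  pd1 u x - Complex.I * ((A x).1 : ℂ) * u x

/-- Covariant partial derivative `∂₂^A u = ∂₂u − iA₂u`. -/
def cpd2 (A : ℝ × ℝ → ℝ × ℝ) (u : ℝ × ℝ → ℂ) (x : ℝ × ℝ) : ℂ :=
  pd2 u x - Complex.I * ((A x).2 : ℂ) * u x

/-- Covariant gradient `∇_A u = ∇u − iAu`. -/
def covGrad (A : ℝ × ℝ → ℝ × ℝ) (u : ℝ × ℝ → ℂ) (x : ℝ × ℝ) : ℂ × ℂ :=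
  (cpd1 A u x, cpd2 A u x)

/-- Covariant Laplacian `Δ_A u = ∂₁^A ∂₁^A u + ∂₂^A ∂₂^A u`. -/
def covLap (A : ℝ × ℝ → ℝ × ℝ) (u : ℝ × ℝ → ℂ) (x : ℝ × ℝ) : ℂ :=
  cpd1 A (cpd1 A u) x + cpd2 A (cpd2 A u) x

/-- Vorticity `μ(u,A) = curl((iu, ∇_A u) + A)`. -/
def svort (u : ℝ × ℝ → ℂ) (A : ℝ × ℝ → ℝ × ℝ) (x : ℝ × ℝ) : ℝ :=
  scurl (fun y => ripv (Complex.I * u y) (covGrad A u y) + A y) x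

/-- Ginzburg–Landau energy density
`g⁰_ε(u,A) = ½(|∇_A u|² + (1−|u|²)²/(2ε²) + (curl A)²)`. -/
def glEnergy (ε : ℝ) (u : ℝ × ℝ → ℂ) (A : ℝ × ℝ → ℝ × ℝ) (x : ℝ × ℝ) : ℝ :=
  (1 / 2) * (Complex.normSq (cpd1 A u x) + Complex.normSq (cpd2 A u x)
    + (1 - Complex.normSq (u x)) ^ 2 / (2 * ε ^ 2) + (scurl A x) ^ 2)

/-! ### Space-time differential operators for functions on `ℝ² × ℝ`
(spatial operators act in the spatial variables, `tdt` is the time derivative) -/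

/-- First spatial partial derivative `∂₁`. -/
def sp1 {E : Type*} [NormedAddCommGroup E] [NormedSpace ℝ E]
    (f : (ℝ × ℝ) × ℝ → E) (z : (ℝ × ℝ) × ℝ) : E := fderiv ℝ f z ((1, 0), 0)

/-- Second spatial partial derivative `∂₂`. -/
def sp2 {E : Type*} [NormedAddCommGroup E] [NormedSpace ℝ E]
    (f : (ℝ × ℝ) × ℝ → E) (z : (ℝ × ℝ) × ℝ) : E := fderiv ℝ f z ((0, 1), 0)

/-- Time derivative `∂_t`. -/
def tdt {E : Type*} [NormedAddCommGroup E] [NormedSpace ℝ E]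
    (f : (ℝ × ℝ) × ℝ → E) (z : (ℝ × ℝ) × ℝ) : E := fderiv ℝ f z ((0, 0), 1)

/-- Spatial gradient. -/
def tgrad (g : (ℝ × ℝ) × ℝ → ℝ) (z : (ℝ × ℝ) × ℝ) : ℝ × ℝ := (sp1 g z, sp2 g z)

/-- Spatial perpendicular gradient `∇^⊥ g = (−∂₂g, ∂₁g)`. -/
def tgradPerp (g : (ℝ × ℝ) × ℝ → ℝ) (z : (ℝ × ℝ) × ℝ) : ℝ × ℝ := (-(sp2 g z), sp1 g z)

/-- Spatial Laplacian. -/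
def tlap (g : (ℝ × ℝ) × ℝ → ℝ) (z : (ℝ × ℝ) × ℝ) : ℝ := sp1 (sp1 g) z + sp2 (sp2 g) z

/-- Spatial curl of a time-dependent vector field. -/
def tcurl (X : (ℝ × ℝ) × ℝ → ℝ × ℝ) (z : (ℝ × ℝ) × ℝ) : ℝ := (sp1 X z).2 - (sp2 X z).1

/-- Spatial divergence of a time-dependent vector field. -/
def tdiv (X : (ℝ × ℝ) × ℝ → ℝ × ℝ) (z : (ℝ × ℝ) × ℝ) : ℝ := (sp1 X z).1 + (sp2 X z).2

/-- Covariant partial derivative `∂₁^B w = ∂₁w − iB₁w`. -/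
def tcpd1 (B : (ℝ × ℝ) × ℝ → ℝ × ℝ) (w : (ℝ × ℝ) × ℝ → ℂ) (z : (ℝ × ℝ) × ℝ) : ℂ :=
  sp1 w z - Complex.I * ((B z).1 : ℂ) * w z

/-- Covariant partial derivative `∂₂^B w = ∂₂w − iB₂w`. -/
def tcpd2 (B : (ℝ × ℝ) × ℝ → ℝ × ℝ) (w : (ℝ × ℝ) × ℝ → ℂ) (z : (ℝ × ℝ) × ℝ) : ℂ :=
  sp2 w z - Complex.I * ((B z).2 : ℂ) * w z

/-- Covariant gradient `∇_B w = ∇w − iBw` (spatial). -/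
def tcovGrad (B : (ℝ × ℝ) × ℝ → ℝ × ℝ) (w : (ℝ × ℝ) × ℝ → ℂ) (z : (ℝ × ℝ) × ℝ) : ℂ × ℂ :=
  (tcpd1 B w z, tcpd2 B w z)

/-- Covariant Laplacian `Δ_B w`. -/
def tcovLap (B : (ℝ × ℝ) × ℝ → ℝ × ℝ) (w : (ℝ × ℝ) × ℝ → ℂ) (z : (ℝ × ℝ) × ℝ) : ℂ :=
  tcpd1 B (tcpd1 B w) z + tcpd2 B (tcpd2 B w) z

/-- Covariant time derivative `∂_ξ w = ∂_t w + iξw`. -/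
def covt (ξ : (ℝ × ℝ) × ℝ → ℝ) (w : (ℝ × ℝ) × ℝ → ℂ) (z : (ℝ × ℝ) × ℝ) : ℂ :=
  tdt w z + Complex.I * (ξ z : ℂ) * w z

/-- Vorticity `μ(w,B) = curl((iw, ∇_B w) + B)`. -/
def tvort (w : (ℝ × ℝ) × ℝ → ℂ) (B : (ℝ × ℝ) × ℝ → ℝ × ℝ) (z : (ℝ × ℝ) × ℝ) : ℝ :=
  tcurl (fun y => ripv (Complex.I * w y) (tcovGrad B w y) + B y) z

/-- Velocity `V(w,B,ξ) = ∇(iw,∂_ξ w) − ∂_t(iw,∇_B w) − (∂_t B + ∇ξ)`. -/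
def tvel (w : (ℝ × ℝ) × ℝ → ℂ) (B : (ℝ × ℝ) × ℝ → ℝ × ℝ) (ξ : (ℝ × ℝ) × ℝ → ℝ)
    (z : (ℝ × ℝ) × ℝ) : ℝ × ℝ :=
  tgrad (fun y => rip (Complex.I * w y) (covt ξ w y)) z
    - tdt (fun y => ripv (Complex.I * w y) (tcovGrad B w y)) z
    - (tdt B z + tgrad ξ z)

/-- Time-dependent Ginzburg–Landau energy density. -/
def tglEnergy (ε : ℝ) (w : (ℝ × ℝ) × ℝ → ℂ) (B : (ℝ × ℝ) × ℝ → ℝ × ℝ)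
    (z : (ℝ × ℝ) × ℝ) : ℝ :=
  (1 / 2) * (Complex.normSq (tcpd1 B w z) + Complex.normSq (tcpd2 B w z)
    + (1 - Complex.normSq (w z)) ^ 2 / (2 * ε ^ 2) + (tcurl B z) ^ 2)

section helpers

variable {V : Type*} [NormedAddCommGroup V] [NormedSpace ℝ V]

lemma dd_re {f : V → ℂ} {z : V} (hf : DifferentiableAt ℝ f z) :
    HasFDerivAt (fun y => (f y).re) (Complex.reCLM.comp (fderiv ℝ f z)) z :=
  Complex.reCLM.hasFDerivAt.comp z hf.hasFDerivAt

lemma dd_im {f : V → ℂ} {z : V} (hf : DifferentiableAt ℝ f z) :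
    HasFDerivAt (fun y => (f y).im) (Complex.imCLM.comp (fderiv ℝ f z)) z :=
  Complex.imCLM.hasFDerivAt.comp z hf.hasFDerivAt

lemma dd_rip {f g : V → ℂ} {z : V} (hf : DifferentiableAt ℝ f z) (hg : DifferentiableAt ℝ g z) :
    DifferentiableAt ℝ (fun y => rip (f y) (g y)) z ∧
    ∀ e, fderiv ℝ (fun y => rip (f y) (g y)) z e
      = rip (fderiv ℝ f z e) (g z) + rip (f z) (fderiv ℝ g z e) := by
  have h := ((dd_re hf).mul (dd_re hg)).add ((dd_im hf).mul (dd_im hg))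
  have h' : HasFDerivAt (fun y => rip (f y) (g y)) _ z := h
  refine ⟨h'.differentiableAt, fun e => ?_⟩
  rw [h'.fderiv]
  simp [rip]
  ring

lemma normSq_eq_rip (a : ℂ) : Complex.normSq a = rip a a := by
  simp [rip, Complex.normSq_apply]

lemma dd_fst {f : V → ℝ × ℝ} {z : V} (hf : DifferentiableAt ℝ f z) :
    HasFDerivAt (fun y => (f y).1) ((ContinuousLinearMap.fst ℝ ℝ ℝ).comp (fderiv ℝ f z)) z :=
  (ContinuousLinearMap.fst ℝ ℝ ℝ).hasFDerivAt.comp z hf.hasFDerivAt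

lemma dd_snd {f : V → ℝ × ℝ} {z : V} (hf : DifferentiableAt ℝ f z) :
    HasFDerivAt (fun y => (f y).2) ((ContinuousLinearMap.snd ℝ ℝ ℝ).comp (fderiv ℝ f z)) z :=
  (ContinuousLinearMap.snd ℝ ℝ ℝ).hasFDerivAt.comp z hf.hasFDerivAt

lemma dd_Imul {f : V → ℂ} {z : V} (hf : DifferentiableAt ℝ f z) :
    DifferentiableAt ℝ (fun y => Complex.I * f y) z ∧
    ∀ e, fderiv ℝ (fun y => Complex.I * f y) z e = Complex.I * fderiv ℝ f z e := by
  have h := hf.hasFDerivAt.const_mul Complex.I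
  refine ⟨h.differentiableAt, fun e => ?_⟩
  rw [h.fderiv]
  simp

/-- Derivative of `g - i b w`. -/
lemma dd_cov {g w : V → ℂ} {b : V → ℝ} {z : V} {b' : V →L[ℝ] ℝ}
    (hg : DifferentiableAt ℝ g z) (hw : DifferentiableAt ℝ w z) (hb : HasFDerivAt b b' z) :
    DifferentiableAt ℝ (fun y => g y - Complex.I * (b y : ℂ) * w y) z ∧
    ∀ e, fderiv ℝ (fun y => g y - Complex.I * (b y : ℂ) * w y) z e
      = fderiv ℝ g z e - Complex.I * (b' e : ℂ) * w z
        - Complex.I * (b z : ℂ) * fderiv ℝ w z e := by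
  have hb2 : HasFDerivAt (fun y => (b y : ℂ)) (Complex.ofRealCLM.comp b') z :=
    Complex.ofRealCLM.hasFDerivAt.comp z hb
  have h := hg.hasFDerivAt.sub ((hb2.const_mul Complex.I).mul hw.hasFDerivAt)
  have h' : HasFDerivAt (fun y => g y - Complex.I * (b y : ℂ) * w y) _ z := h
  refine ⟨h'.differentiableAt, fun e => ?_⟩
  rw [h'.fderiv]
  simp
  ring

/-- Derivative of the diagonal stress-energy components. -/
lemma dd_T {a p q w : V → ℂ} {h : V → ℝ} {z : V} (ε : ℝ)
    (ha : DifferentiableAt ℝ a z)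
    (hp : DifferentiableAt ℝ p z) (hq : DifferentiableAt ℝ q z) (hw : DifferentiableAt ℝ w z)
    (hh : DifferentiableAt ℝ h z) (e : V) :
    fderiv ℝ (fun y => rip (a y) (a y) - ((1 / 2) * (Complex.normSq (p y) + Complex.normSq (q y))
        + (1 - Complex.normSq (w y)) ^ 2 / (4 * ε ^ 2) - (1 / 2) * (h y) ^ 2)) z e
      = 2 * rip (a z) (fderiv ℝ a z e) - (rip (p z) (fderiv ℝ p z e) + rip (q z) (fderiv ℝ q z e)
        - (ε ^ 2)⁻¹ * (1 - rip (w z) (w z)) * rip (w z) (fderiv ℝ w z e)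
        - h z * fderiv ℝ h z e) := by
  simp only [normSq_eq_rip]
  obtain ⟨a1, a2⟩ := dd_rip ha ha
  obtain ⟨p1, p2⟩ := dd_rip hp hp
  obtain ⟨q1, q2⟩ := dd_rip hq hq
  obtain ⟨w1, w2⟩ := dd_rip hw hw
  have H := a1.hasFDerivAt.sub ((((p1.hasFDerivAt.add q1.hasFDerivAt).const_mul (1 / 2)).add
    (((w1.hasFDerivAt.const_sub 1).pow 2).mul_const ((4 * ε ^ 2)⁻¹))).sub
    ((hh.hasFDerivAt.pow 2).const_mul (1 / 2)))
  have H' : HasFDerivAt (fun y => rip (a y) (a y) - ((1 / 2) * (rip (p y) (p y) + rip (q y) (q y))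
        + (1 - rip (w y) (w y)) ^ 2 / (4 * ε ^ 2) - (1 / 2) * (h y) ^ 2)) _ z := H
  rw [H'.fderiv]
  simp [a2, p2, q2, w2]
  simp only [rip]
  ring

end helpers

lemma dir_facts {E : Type*} [NormedAddCommGroup E] [NormedSpace ℝ E]
    {f : (ℝ × ℝ) × ℝ → E} {z : (ℝ × ℝ) × ℝ} (hf : ContDiffAt ℝ (⊤ : ℕ∞) f z) :
    DifferentiableAt ℝ f z ∧ DifferentiableAt ℝ (sp1 f) z ∧ DifferentiableAt ℝ (sp2 f) z ∧
    sp1 (sp2 f) z = sp2 (sp1 f) z := by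
  have hd : DifferentiableAt ℝ (fderiv ℝ f) z :=
    (hf.fderiv_right (m := 1) (by norm_cast)).differentiableAt (by simp)
  have key : ∀ e, HasFDerivAt (fun y => fderiv ℝ f y e)
      ((ContinuousLinearMap.apply ℝ E e).comp (fderiv ℝ (fderiv ℝ f) z)) z := by
    intro e
    exact (ContinuousLinearMap.apply ℝ E e).hasFDerivAt.comp z hd.hasFDerivAt
  have hs : IsSymmSndFDerivAt ℝ f z := hf.isSymmSndFDerivAt (by simp; norm_cast)
  refine ⟨hf.differentiableAt (by simp), (key _).differentiableAt, (key _).differentiableAt, ?_⟩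
  have e1 : fderiv ℝ (sp1 f) z = _ := (key ((1, 0), 0)).fderiv
  have e2 : fderiv ℝ (sp2 f) z = _ := (key ((0, 1), 0)).fderiv
  show fderiv ℝ (sp2 f) z _ = fderiv ℝ (sp1 f) z _
  rw [e1, e2]
  exact hs _ _

lemma dd_curl {B : (ℝ × ℝ) × ℝ → ℝ × ℝ} {z : (ℝ × ℝ) × ℝ}
    (h1 : DifferentiableAt ℝ (sp1 B) z) (h2 : DifferentiableAt ℝ (sp2 B) z) :
    DifferentiableAt ℝ (tcurl B) z ∧
    ∀ e, fderiv ℝ (tcurl B) z e = (fderiv ℝ (sp1 B) z e).2 - (fderiv ℝ (sp2 B) z e).1 := by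
  have h : HasFDerivAt (tcurl B) _ z := (dd_snd h1).sub (dd_fst h2)
  refine ⟨h.differentiableAt, fun e => ?_⟩
  rw [h.fderiv]
  simp

/-- for solutions of the accelerated Ginzburg–Landau equations,
`div T = λ⁻¹((∂_t v, ∇_B v) − h'(∂_t B)^⊥) + (v, ∇_B v)|Z|² − μ(v,B) Z^⊥`. -/
theorem stress_energy_tensor_divergence_accelerated
    (Ω : Set (ℝ × ℝ)) (hΩ : IsOpen Ω) (ε : ℝ) (hε : 0 < ε) (lam : ℝ) (hlam : 0 < lam)
    (Z : ℝ × ℝ → ℝ × ℝ) (hZ : ContDiffOn ℝ (⊤ : ℕ∞) Z Ω)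
    (v : (ℝ × ℝ) × ℝ → ℂ) (B : (ℝ × ℝ) × ℝ → ℝ × ℝ)
    (hv : ContDiffOn ℝ (⊤ : ℕ∞) v (Ω ×ˢ (Set.univ : Set ℝ)))
    (hB : ContDiffOn ℝ (⊤ : ℕ∞) B (Ω ×ˢ (Set.univ : Set ℝ)))
    (heq1 : ∀ x ∈ Ω, ∀ t : ℝ,
      (lam : ℂ)⁻¹ * tdt v (x, t)
        = tcovLap B v (x, t)
          + v (x, t) / (ε ^ 2 : ℂ) * (1 - (Complex.normSq (v (x, t)) : ℂ))
          + 2 * Complex.I * cdotR (tcovGrad B v (x, t)) (Z x)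
          - v (x, t) * ((rdot (Z x) (Z x) : ℝ) : ℂ))
    (heq2 : ∀ x ∈ Ω, ∀ t : ℝ,
      lam⁻¹ • tdt B (x, t)
        = tgradPerp (tcurl B) (x, t)
          + ripv (Complex.I * v (x, t)) (tcovGrad B v (x, t))
          + (Complex.normSq (v (x, t)) - 1) • Z x)
    (T11 T12 T21 T22 : (ℝ × ℝ) × ℝ → ℝ)
    (hT11 : T11 = fun z => rip (tcpd1 B v z) (tcpd1 B v z)
      - ((1 / 2) * (Complex.normSq (tcpd1 B v z) + Complex.normSq (tcpd2 B v z))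
        + (1 - Complex.normSq (v z)) ^ 2 / (4 * ε ^ 2) - (1 / 2) * (tcurl B z) ^ 2))
    (hT12 : T12 = fun z => rip (tcpd1 B v z) (tcpd2 B v z))
    (hT21 : T21 = fun z => rip (tcpd2 B v z) (tcpd1 B v z))
    (hT22 : T22 = fun z => rip (tcpd2 B v z) (tcpd2 B v z)
      - ((1 / 2) * (Complex.normSq (tcpd1 B v z) + Complex.normSq (tcpd2 B v z))
        + (1 - Complex.normSq (v z)) ^ 2 / (4 * ε ^ 2) - (1 / 2) * (tcurl B z) ^ 2)) :
    ∀ x ∈ Ω, ∀ t : ℝ,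
      (sp1 T11 (x, t) + sp2 T21 (x, t), sp1 T12 (x, t) + sp2 T22 (x, t))
        = lam⁻¹ • (ripv (tdt v (x, t)) (tcovGrad B v (x, t))
              - (tcurl B (x, t)) • perp (tdt B (x, t)))
          + (rdot (Z x) (Z x)) • ripv (v (x, t)) (tcovGrad B v (x, t))
          - (tvort v B (x, t)) • perp (Z x) := by
  intro x hx t
  have hU : Ω ×ˢ (Set.univ : Set ℝ) ∈ nhds (x, t) :=
    (hΩ.prod isOpen_univ).mem_nhds ⟨hx, Set.mem_univ t⟩
  obtain ⟨v0, v1, v2, vs⟩ := dir_facts (hv.contDiffAt hU)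
  obtain ⟨B0, B1, B2, Bs⟩ := dir_facts (hB.contDiffAt hU)
  have E1 := heq1 x hx t
  have E2 := heq2 x hx t
  clear heq1 heq2 hv hB hZ
  generalize hz : ((x, t) : (ℝ × ℝ) × ℝ) = z at *
  obtain ⟨c0, c1⟩ := dd_curl B1 B2
  have P : DifferentiableAt ℝ (tcpd1 B v) z ∧ _ := dd_cov v1 v0 (dd_fst B0)
  have Q : DifferentiableAt ℝ (tcpd2 B v) z ∧ _ := dd_cov v2 v0 (dd_snd B0)
  have P2 : ∀ e, fderiv ℝ (tcpd1 B v) z e = _ := P.2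
  have Q2 : ∀ e, fderiv ℝ (tcpd2 B v) z e = _ := Q.2
  obtain ⟨P, -⟩ := P
  obtain ⟨Q, -⟩ := Q
  have d11 := dd_T ε P P Q v0 c0 ((1, 0), 0)
  rw [← hT11] at d11
  replace d11 : sp1 T11 z = _ := d11
  have d22 := dd_T ε Q P Q v0 c0 ((0, 1), 0)
  rw [← hT22] at d22
  replace d22 : sp2 T22 z = _ := d22
  have d12 := (dd_rip P Q).2 ((1, 0), 0)
  rw [← hT12] at d12
  replace d12 : sp1 T12 z = _ := d12
  have d21 := (dd_rip Q P).2 ((0, 1), 0)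
  rw [← hT21] at d21
  replace d21 : sp2 T21 z = _ := d21
  have hvort : tvort v B z = 
      (rip (Complex.I * sp1 v z) (tcpd2 B v z) + rip (Complex.I * v z) (sp1 (tcpd2 B v) z)
        + (sp1 B z).2) -
      (rip (Complex.I * sp2 v z) (tcpd1 B v z) + rip (Complex.I * v z) (sp2 (tcpd1 B v) z)
        + (sp2 B z).1) := by
    obtain ⟨i0, i1⟩ := dd_Imul v0
    obtain ⟨r0, r1⟩ := dd_rip i0 P
    obtain ⟨s0, s1⟩ := dd_rip i0 Q
    have H := (r0.hasFDerivAt.prodMk s0.hasFDerivAt).add B0.hasFDerivAt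
    have H' : HasFDerivAt
        (fun y => ripv (Complex.I * v y) (tcovGrad B v y) + B y) _ z := H
    unfold tvort tcurl
    simp only [sp1, sp2]
    rw [H'.fderiv]
    simp [r1, s1, i1]
  rw [hvort, d11, d22, d12, d21]
  have cc1 : fderiv ℝ (tcurl B) z ((1, 0), 0) = sp1 (tcurl B) z := rfl
  have cc2 : fderiv ℝ (tcurl B) z ((0, 1), 0) = sp2 (tcurl B) z := rfl
  rw [cc1, cc2]
  have pot : v z / (ε ^ 2 : ℂ) * (1 - (Complex.normSq (v z) : ℂ))
      = (((ε ^ 2)⁻¹ * (1 - rip (v z) (v z)) : ℝ) : ℂ) * v z := by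
    rw [normSq_eq_rip]; push_cast; ring
  have hl : (lam : ℂ)⁻¹ = ((lam⁻¹ : ℝ) : ℂ) := by push_cast; rfl
  rw [pot, hl] at E1
  have L : tcovLap B v z = (fderiv ℝ (tcpd1 B v) z ((1, 0), 0)
      - Complex.I * ((B z).1 : ℂ) * tcpd1 B v z) + (fderiv ℝ (tcpd2 B v) z ((0, 1), 0)
      - Complex.I * ((B z).2 : ℂ) * tcpd2 B v z) := rfl
  rw [L] at E1
  have sv : ∀ f : (ℝ × ℝ) × ℝ → ℂ, fderiv ℝ f z ((1, 0), 0) = sp1 f z := fun _ => rfl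
  have sv2 : ∀ f : (ℝ × ℝ) × ℝ → ℂ, fderiv ℝ f z ((0, 1), 0) = sp2 f z := fun _ => rfl
  have m12 : sp1 (tcpd2 B v) z = _ := Q2 ((1, 0), 0)
  have m21 : sp2 (tcpd1 B v) z = _ := P2 ((0, 1), 0)
  simp only [sv, sv2, ContinuousLinearMap.comp_apply, ContinuousLinearMap.coe_fst',
    ContinuousLinearMap.coe_snd'] at m12 m21 E1 ⊢
  rw [vs] at m12
  have w1 : sp1 v z = tcpd1 B v z + Complex.I * ((B z).1 : ℂ) * v z := by simp [tcpd1]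
  have w2 : sp2 v z = tcpd2 B v z + Complex.I * ((B z).2 : ℂ) * v z := by simp [tcpd2]
  have b12 : (fderiv ℝ B z ((1, 0), 0)).2 = (sp1 B z).2 := rfl
  have b21 : (fderiv ℝ B z ((0, 1), 0)).1 = (sp2 B z).1 := rfl
  rw [b12] at m12
  rw [b21] at m21
  have hc : tcurl B z = (sp1 B z).2 - (sp2 B z).1 := rfl
  rw [w1] at m12
  rw [w2] at m21
  rw [w1, w2, hc, m12, m21]
  simp only [tcovGrad, cdotR] at E1 E2 ⊢
  clear hvort L cc1 cc2 d11 d22 d12 d21 P2 Q2 P Q sv sv2 m12 m21 b12 b21 hc w1 w2 c0 c1 pot hl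
  generalize tcpd1 B v z = p at *
  generalize tcpd2 B v z = q at *
  generalize sp1 (tcpd1 B v) z = p1 at *
  generalize sp2 (tcpd2 B v) z = q2 at *
  generalize sp2 (sp1 v) z = v12 at *
  generalize tdt v z = vt at *
  generalize (ε ^ 2)⁻¹ = k at *
  generalize lam⁻¹ = l at *
  have E1r := congrArg Complex.re E1
  have E1i := congrArg Complex.im E1
  have E2a := congrArg Prod.fst E2
  have E2b := congrArg Prod.snd E2
  simp [tgradPerp, ripv, rip, perp, rdot, Complex.normSq_apply] at E1r E1i E2a E2b
  ext
  · simp [ripv, rip, perp, rdot]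
    linear_combination (-p.re) * E1r - p.im * E1i - ((sp1 B z).2 - (sp2 B z).1) * E2b
  · simp [ripv, rip, perp, rdot]
    linear_combination (-q.re) * E1r - q.im * E1i + ((sp1 B z).2 - (sp2 B z).1) * E2a

end
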